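/- arXiv:2010.09785 — 2 statements merged into one kernel-verified Lean document; each statement's English description precedes it below -/
import Mathlib

section
/- Let P and L be skew-symmetric 3×3 real matrices and set F := 1 − (1/2)·tr(L·P). Then the matrix I − L·P is invertible if and only if F ≠ 0. -/
/-!
Write `L = [a]×` and `P = [b]×` as matrices of cross products. The expansion
`a × (b × w) = (a ⬝ w) b - (a ⬝ b) w` reads `L * P = b aᵀ - (a ⬝ b) I`. Its trace is `-2 (a ⬝ b)`,
so `F = 1 + a ⬝ b`, and `I - L * P = F I - b aᵀ` is a rank-one perturbation of a scalar matrix. Its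
determinant is `F² (F - a ⬝ b) = F²`.
-/

open Matrix

section

variable {n R : Type*}

lemma apply_self_eq_zero_of_transpose_eq_neg [Ring R] [Invertible (2 : R)] {A : Matrix n n R}
    (hA : Aᵀ = -A) (i : n) : A i i = 0 := by
  have hneg : A i i = -A i i := congrFun₂ hA i i
  have htwo : 2 * A i i = 0 := by rw [two_mul, ← eq_neg_iff_add_eq_zero, ← hneg]
  exact (isUnit_of_invertible (2 : R)).mul_right_eq_zero.mp htwo

lemma det_smul_one_sub_vecMulVec [Fintype n] [DecidableEq n] [CommRing R] (c : R) (u v : n → R) :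
    (c • (1 : Matrix n n R) - vecMulVec u v).det =
      c ^ Fintype.card n - (u ⬝ᵥ v) * c ^ (Fintype.card n - 1) := by
  rw [smul_one_eq_diagonal, ← scalar_apply, ← eval_charpoly, charpoly_vecMulVec]
  simp

end

section CrossMatrix

variable {R : Type*} [CommRing R]

/-- The matrix `[a]×` of the linear map `w ↦ a × w` in the standard basis. -/
def crossMatrix (a : Fin 3 → R) : Matrix (Fin 3) (Fin 3) R :=
  LinearMap.toMatrix' (crossProduct a)

lemma crossMatrix_eq (a : Fin 3 → R) :
    crossMatrix a = !![0, -a 2, a 1; a 2, 0, -a 0; -a 1, a 0, 0] := by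
  ext i j
  fin_cases i <;> fin_cases j <;> simp [crossMatrix, LinearMap.toMatrix'_apply, cross_apply]

lemma exists_crossMatrix_eq_of_transpose_eq_neg [Invertible (2 : R)]
    {A : Matrix (Fin 3) (Fin 3) R} (hA : Aᵀ = -A) : ∃ a, crossMatrix a = A := by
  have hdiag := apply_self_eq_zero_of_transpose_eq_neg hA
  have hskew (i j : Fin 3) : A j i = -A i j := congrFun₂ hA i j
  refine ⟨![A 2 1, A 0 2, A 1 0], ?_⟩
  rw [crossMatrix_eq]
  ext i j
  fin_cases i <;> fin_cases j <;> simp [hdiag, hskew 0 1, hskew 1 2, hskew 0 2]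

lemma crossMatrix_mul_crossMatrix (a b : Fin 3 → R) :
    crossMatrix a * crossMatrix b = vecMulVec b a - (a ⬝ᵥ b) • 1 := by
  apply ext_of_mulVec_single
  intro i
  simp only [← mulVec_mulVec, crossMatrix, LinearMap.toMatrix'_mulVec,
    cross_cross_eq_smul_sub_smul', sub_mulVec, vecMulVec_mulVec, smul_mulVec, one_mulVec,
    op_smul_eq_smul, dotProduct_comm b a]

lemma trace_crossMatrix_mul_crossMatrix (a b : Fin 3 → R) :
    (crossMatrix a * crossMatrix b).trace = -2 * (a ⬝ᵥ b) := by
  rw [crossMatrix_mul_crossMatrix, trace_sub, trace_vecMulVec, trace_smul, trace_one,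
    Fintype.card_fin, dotProduct_comm b a, smul_eq_mul]
  push_cast
  ring

lemma det_one_sub_crossMatrix_mul_crossMatrix (a b : Fin 3 → R) :
    (1 - crossMatrix a * crossMatrix b).det = (1 + a ⬝ᵥ b) ^ 2 := by
  have hrank : 1 - crossMatrix a * crossMatrix b = (1 + a ⬝ᵥ b) • 1 - vecMulVec b a := by
    rw [crossMatrix_mul_crossMatrix, add_smul, one_smul]
    abel
  rw [hrank, det_smul_one_sub_vecMulVec, Fintype.card_fin, dotProduct_comm b a]
  ring

end CrossMatrix

theorem stmt_2_general {R : Type*} [CommRing R] [Invertible (2 : R)]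
    (P L : Matrix (Fin 3) (Fin 3) R) (hP : Pᵀ = -P) (hL : Lᵀ = -L)
    (F : R) (hF : F = 1 - ⅟2 * (L * P).trace) :
    IsUnit (1 - L * P) ↔ IsUnit F := by
  obtain ⟨a, rfl⟩ := exists_crossMatrix_eq_of_transpose_eq_neg hL
  obtain ⟨b, rfl⟩ := exists_crossMatrix_eq_of_transpose_eq_neg hP
  have hF_dot : F = 1 + a ⬝ᵥ b := by
    rw [hF, trace_crossMatrix_mul_crossMatrix, neg_mul, mul_neg, invOf_mul_cancel_left,
      sub_neg_eq_add]
  rw [isUnit_iff_isUnit_det, det_one_sub_crossMatrix_mul_crossMatrix, ← hF_dot,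
    isUnit_pow_iff two_ne_zero]

theorem stmt_2 (P L : Matrix (Fin 3) (Fin 3) ℝ)
    (hP : Pᵀ = -P) (hL : Lᵀ = -L)
    (F : ℝ) (hF : F = 1 - (1 / 2) * (L * P).trace) :
    IsUnit (1 - L * P) ↔ F ≠ 0 := by
  rw [stmt_2_general P L hP hL F (by rwa [invOf_eq_inv, ← one_div]), isUnit_iff_ne_zero]
end

section
/- Let U ⊆ ℝ⁴ be open and K₁, K₂ : U → ℝ smooth. Define the bracket of smooth functions f, g : U → ℝ by {f,g}(x) = det M(x), where M(x) is the 4×4 matrix whose rows are ∇K₁(x), ∇K₂(x), ∇f(x), ∇g(x). Then this bracket satisfies the Jacobi identity on U; i.e., the Flaschka–Ratiu bivector field on ℝ⁴ determined by the prescribed Casimir functions K₁, K₂ is a Poisson bivector field. -/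
open Matrix

/-- The gradient `(∂f/∂x₁, …, ∂f/∂x_m)` of a function on `ℝ^m`. -/
noncomputable def gradVec {m : ℕ} (f : (Fin m → ℝ) → ℝ) (x : Fin m → ℝ) :
    Fin m → ℝ :=
  fun i => fderiv ℝ f x (Pi.single i 1)

/-- The Flaschka–Ratiu bracket on `ℝ⁴` associated to prescribed Casimirs `K₁, K₂`:
`{f,g}(x) = det(∇K₁(x), ∇K₂(x), ∇f(x), ∇g(x))`. -/
noncomputable def frBracket4 (K₁ K₂ f g : (Fin 4 → ℝ) → ℝ) (x : Fin 4 → ℝ) : ℝ :=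
  (Matrix.of ![gradVec K₁ x, gradVec K₂ x, gradVec f x, gradVec g x]).det

/-!
Dropping the last entry of the Nambu bracket `{F₁, …, F_m} = det(∇F₁, …, ∇F_m)` leaves a vector
field `X` with `{F₁, …, F_{m-1}, g} = X · ∇g`, whose components are cofactors of a Jacobian matrix;
since Hessians are symmetric, `X` is divergence-free. Its flow therefore preserves volume, so `X`
acts as a derivation on the Nambu bracket:
`X · ∇{G₁, …, G_m} = ∑ᵢ {G₁, …, X · ∇Gᵢ, …, G_m}`.
For `F = (K, f)` and `G = (K, g, h)` the terms with `Gᵢ` a Casimir vanish, because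
`{K, f, Kᵢ}` is the determinant of a matrix with a repeated row. What remains is the Jacobi
identity.
-/

section Determinant

theorem updateRow_last_snoc {R : Type*} {n : ℕ} (M : Fin n → Fin (n + 1) → R)
    (u v : Fin (n + 1) → R) :
    (of (Fin.snoc M u)).updateRow (Fin.last n) v = of (Fin.snoc M v) :=
  Fin.update_snoc_last (α := fun _ => Fin (n + 1) → R) u M v

variable {R ι : Type*} [CommRing R] [Fintype ι]

theorem trace_mul_eq_zero_of_isSymm_of_transpose_eq_neg [IsAddTorsionFree R]
    {A B : Matrix ι ι R} (hA : A.IsSymm) (hB : Bᵀ = -B) : (A * B).trace = 0 := by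
  rw [← self_eq_neg]
  calc (A * B).trace = (Bᵀ * Aᵀ).trace := by rw [← transpose_mul, trace_transpose]
    _ = -(A * B).trace := by rw [hB, hA.eq, Matrix.neg_mul, trace_neg, trace_mul_comm]

variable [DecidableEq ι]

theorem det_updateRow_eq_vecMul_adjugate (M : Matrix ι ι R) (i : ι) (v : ι → R) :
    (M.updateRow i v).det = (v ᵥ* M.adjugate) i := by
  rw [← cramer_transpose_apply, cramer_eq_adjugate_mulVec, ← adjugate_transpose, mulVec_transpose]

theorem sum_det_updateRow_vecMul (M B : Matrix ι ι R) :
    ∑ i, (M.updateRow i (M i ᵥ* B)).det = B.trace * M.det := by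
  calc ∑ i, (M.updateRow i (M i ᵥ* B)).det = (M * B * M.adjugate).trace := by
        simp only [det_updateRow_eq_vecMul_adjugate, trace, diag_apply, mul_apply_eq_vecMul]
    _ = (M.adjugate * M * B).trace := trace_mul_cycle _ _ _
    _ = B.trace * M.det := by
        rw [adjugate_mul, smul_mul, Matrix.one_mul, trace_smul, smul_eq_mul, mul_comm]

theorem det_updateRow_eq_dotProduct (M : Matrix ι ι R) (i : ι) (v : ι → R) :
    (M.updateRow i v).det = v ⬝ᵥ fun j => (M.updateRow i (Pi.single j 1)).det := by
  simp only [det_updateRow_eq_vecMul_adjugate, single_one_vecMul]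
  rfl

theorem det_updateRow_updateRow_swap (M : Matrix ι ι R) {i j : ι} (hij : i ≠ j) (u v : ι → R) :
    ((M.updateRow i u).updateRow j v).det = -((M.updateRow i v).updateRow j u).det := by
  have swap_rows : (M.updateRow i u).updateRow j v =
      ((M.updateRow i v).updateRow j u).submatrix (Equiv.swap i j) id := by
    ext k l
    rcases eq_or_ne k i with rfl | hki
    · simp [hij]
    rcases eq_or_ne k j with rfl | hkj
    · simp [hij]
    · simp [Equiv.swap_apply_of_ne_of_ne hki hkj, hki, hkj]
  simp [swap_rows, det_permute, Equiv.Perm.sign_swap hij]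

theorem sum_det_updateRow_single_updateRow_eq_zero [IsAddTorsionFree R] (M : Matrix ι ι R)
    {i k : ι} (hik : i ≠ k) {A : Matrix ι ι R} (hA : A.IsSymm) :
    ∑ j, ((M.updateRow i (Pi.single j 1)).updateRow k (A j)).det = 0 := by
  let minors : Matrix ι ι R :=
    of fun l j => ((M.updateRow i (Pi.single j 1)).updateRow k (Pi.single l 1)).det
  have minors_skew : minorsᵀ = -minors := by
    ext l j
    exact det_updateRow_updateRow_swap M hik _ _
  calc ∑ j, ((M.updateRow i (Pi.single j 1)).updateRow k (A j)).det = (A * minors).trace :=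
        Finset.sum_congr rfl fun j _ => det_updateRow_eq_dotProduct _ k (A j)
    _ = 0 := trace_mul_eq_zero_of_isSymm_of_transpose_eq_neg hA minors_skew

end Determinant

section Calculus

variable {𝕜 E ι : Type*} [NontriviallyNormedField 𝕜] [NormedAddCommGroup E] [NormedSpace 𝕜 E]
  [Fintype ι]

theorem fderiv_dotProduct_apply {u v : E → ι → 𝕜} {x : E} (hu : DifferentiableAt 𝕜 u x)
    (hv : DifferentiableAt 𝕜 v x) (w : E) :
    fderiv 𝕜 (fun y => u y ⬝ᵥ v y) x w = u x ⬝ᵥ fderiv 𝕜 v x w + fderiv 𝕜 u x w ⬝ᵥ v x := by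
  have hasFDerivAt_sum := HasFDerivAt.fun_sum (u := Finset.univ) fun i _ =>
    (hasFDerivAt_pi'.1 hu.hasFDerivAt i).mul (hasFDerivAt_pi'.1 hv.hasFDerivAt i)
  refine (congrArg (· w) hasFDerivAt_sum.fderiv).trans ?_
  simp [dotProduct, Finset.sum_add_distrib, mul_comm]

variable [DecidableEq ι]

/-- The determinant as a continuous multilinear function of the rows, the form in which the
differentiation rules for multilinear maps apply to it. -/
def detRowContinuousMultilinear : ContinuousMultilinearMap 𝕜 (fun _ : ι => ι → 𝕜) 𝕜 :=
  { detRowAlternating.toMultilinearMap with cont := continuous_id.matrix_det }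

theorem differentiableAt_det {M : E → Matrix ι ι 𝕜} {x : E}
    (hM : ∀ i, DifferentiableAt 𝕜 (fun y => M y i) x) :
    DifferentiableAt 𝕜 (fun y => (M y).det) x :=
  (HasFDerivAt.multilinear_comp (f := detRowContinuousMultilinear)
    fun i => (hM i).hasFDerivAt).differentiableAt

theorem fderiv_det_apply {M : E → Matrix ι ι 𝕜} {x : E}
    (hM : ∀ i, DifferentiableAt 𝕜 (fun y => M y i) x) (v : E) :
    fderiv 𝕜 (fun y => (M y).det) x v =
      ∑ i, ((M x).updateRow i (fderiv 𝕜 (fun y => M y i) x v)).det := by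
  have hasFDerivAt_det := HasFDerivAt.multilinear_comp (f := detRowContinuousMultilinear)
    fun i => (hM i).hasFDerivAt
  refine (congrArg (· v) hasFDerivAt_det.fderiv).trans ?_
  simp only [_root_.sum_apply]
  rfl

end Calculus

section Gradient

variable {m : ℕ} {f : (Fin m → ℝ) → ℝ} {x : Fin m → ℝ}

theorem gradVec_dotProduct (f : (Fin m → ℝ) → ℝ) (x v : Fin m → ℝ) :
    gradVec f x ⬝ᵥ v = fderiv ℝ f x v := by
  conv_rhs => rw [pi_eq_sum_univ' v, map_sum]
  simp [dotProduct, gradVec, mul_comm]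

theorem differentiableAt_fderiv_of_contDiffAt_two (hf : ContDiffAt ℝ 2 f x) :
    DifferentiableAt ℝ (fderiv ℝ f) x :=
  (hf.fderiv_right (m := 1) (by norm_num)).differentiableAt one_ne_zero

theorem differentiableAt_gradVec (hf : ContDiffAt ℝ 2 f x) : DifferentiableAt ℝ (gradVec f) x :=
  differentiableAt_pi.2 fun _ =>
    (differentiableAt_fderiv_of_contDiffAt_two hf).clm_apply (differentiableAt_const _)

theorem fderiv_gradVec_apply (hf : ContDiffAt ℝ 2 f x) (v : Fin m → ℝ) (i : Fin m) :
    fderiv ℝ (gradVec f) x v i = fderiv ℝ (fderiv ℝ f) x v (Pi.single i 1) := by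
  have hf' := differentiableAt_fderiv_of_contDiffAt_two hf
  calc fderiv ℝ (gradVec f) x v i = fderiv ℝ (fun y => fderiv ℝ f y (Pi.single i 1)) x v :=
        (congrArg (· v) (fderiv_apply (differentiableAt_gradVec hf) i)).symm
    _ = fderiv ℝ (fderiv ℝ f) x v (Pi.single i 1) := by
        simp [fderiv_clm_apply hf' (differentiableAt_const _)]

/-- The matrix `∂ᵢ∂ⱼf` of second partial derivatives; row `i` is `∂ᵢ∇f`. -/
noncomputable def hessian (f : (Fin m → ℝ) → ℝ) (x : Fin m → ℝ) : Matrix (Fin m) (Fin m) ℝ :=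
  of fun i => fderiv ℝ (gradVec f) x (Pi.single i 1)

theorem isSymm_hessian (hf : ContDiffAt ℝ 2 f x) : (hessian f x).IsSymm := by
  ext i j
  simp only [hessian, transpose_apply, of_apply, fderiv_gradVec_apply hf]
  exact hf.isSymmSndFDerivAt (by simp) _ _

theorem hessian_mulVec (hf : ContDiffAt ℝ 2 f x) (v : Fin m → ℝ) :
    hessian f x *ᵥ v = fderiv ℝ (gradVec f) x v := by
  rw [← (isSymm_hessian hf).eq, mulVec_transpose]
  conv_rhs => rw [pi_eq_sum_univ' v, map_sum]
  simp only [vecMul_eq_sum, map_smul]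
  rfl

end Gradient

section VectorField

variable {m : ℕ}

/-- The divergence `∑ⱼ ∂ⱼXⱼ` of a vector field on `ℝ^m`, as the trace of its Jacobian matrix. -/
noncomputable def divergence (X : (Fin m → ℝ) → Fin m → ℝ) (x : Fin m → ℝ) : ℝ :=
  (LinearMap.toMatrix' (fderiv ℝ X x).toLinearMap).trace

theorem divergence_eq_sum {X : (Fin m → ℝ) → Fin m → ℝ} {x : Fin m → ℝ}
    (hX : DifferentiableAt ℝ X x) :
    divergence X x = ∑ j, fderiv ℝ (fun y => X y j) x (Pi.single j 1) := by
  simp [divergence, trace, LinearMap.toMatrix'_apply, fderiv_apply hX]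

/-- The derivative `X · ∇g` of a function `g` along a vector field `X`. -/
noncomputable def directionalDeriv (X : (Fin m → ℝ) → Fin m → ℝ) (g : (Fin m → ℝ) → ℝ)
    (x : Fin m → ℝ) : ℝ :=
  gradVec g x ⬝ᵥ X x

theorem gradVec_directionalDeriv {X : (Fin m → ℝ) → Fin m → ℝ} {g : (Fin m → ℝ) → ℝ}
    {x : Fin m → ℝ} (hX : DifferentiableAt ℝ X x) (hg : ContDiffAt ℝ 2 g x) :
    gradVec (directionalDeriv X g) x =
      fderiv ℝ (gradVec g) x (X x) +
        gradVec g x ᵥ* LinearMap.toMatrix' (fderiv ℝ X x).toLinearMap := by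
  ext j
  calc gradVec (directionalDeriv X g) x j
      = gradVec g x ⬝ᵥ fderiv ℝ X x (Pi.single j 1) + hessian g x j ⬝ᵥ X x :=
        fderiv_dotProduct_apply (differentiableAt_gradVec hg) hX _
    _ = (gradVec g x ᵥ* LinearMap.toMatrix' (fderiv ℝ X x).toLinearMap) j +
          (hessian g x *ᵥ X x) j := by
        simp [vecMul, mulVec, dotProduct, LinearMap.toMatrix'_apply]
    _ = _ := by rw [hessian_mulVec hg, add_comm, Pi.add_apply]

end VectorField

section NambuBracket

variable {m n : ℕ}

/-- The Nambu bracket `{F₁, …, F_m}(x) = det(∇F₁(x), …, ∇F_m(x))` of `m` functions on `ℝ^m`. -/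
noncomputable def nambuBracket (F : Fin m → (Fin m → ℝ) → ℝ) (x : Fin m → ℝ) : ℝ :=
  (of fun i => gradVec (F i) x).det

theorem nambuBracket_update (G : Fin m → (Fin m → ℝ) → ℝ) (i : Fin m) (u : (Fin m → ℝ) → ℝ)
    (x : Fin m → ℝ) :
    nambuBracket (Function.update G i u) x =
      ((of fun k => gradVec (G k) x).updateRow i (gradVec u x)).det := by
  refine congrArg Matrix.det (funext fun k => ?_)
  exact Function.apply_update (fun _ φ => gradVec φ x) G i u k

theorem nambuBracket_update_zero (G : Fin m → (Fin m → ℝ) → ℝ) (i : Fin m) :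
    nambuBracket (Function.update G i 0) = 0 := by
  ext x
  rw [nambuBracket_update]
  refine det_eq_zero_of_row_eq_zero i fun j => ?_
  simp [gradVec]

theorem nambuBracket_eq_zero_of_eq {F : Fin m → (Fin m → ℝ) → ℝ} {i j : Fin m} (hij : i ≠ j)
    (hF : F i = F j) : nambuBracket F = 0 :=
  funext fun x => det_zero_of_row_eq hij (congrArg (gradVec · x) hF)

theorem nambuBracket_comp_swap (F : Fin m → (Fin m → ℝ) → ℝ) {i j : Fin m} (hij : i ≠ j) :
    nambuBracket (F ∘ Equiv.swap i j) = -nambuBracket F :=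
  funext fun x => detRowAlternating.map_swap (fun k => gradVec (F k) x) hij

theorem fderiv_nambuBracket_apply {G : Fin m → (Fin m → ℝ) → ℝ} {x : Fin m → ℝ}
    (hG : ∀ i, ContDiffAt ℝ 2 (G i) x) (v : Fin m → ℝ) :
    fderiv ℝ (nambuBracket G) x v =
      ∑ i, ((of fun k => gradVec (G k) x).updateRow i (fderiv ℝ (gradVec (G i)) x v)).det :=
  fderiv_det_apply (M := fun y => of fun i => gradVec (G i) y)
    (fun i => differentiableAt_gradVec (hG i)) v

/-- The Lie derivative of `dG₁ ∧ ⋯ ∧ dG_m = {G₁, …, G_m} vol` along `X`, computed in two ways: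
it commutes with each `d`, and it multiplies `vol` by the divergence. -/
theorem sum_nambuBracket_update_directionalDeriv {X : (Fin m → ℝ) → Fin m → ℝ}
    {G : Fin m → (Fin m → ℝ) → ℝ} {x : Fin m → ℝ} (hX : DifferentiableAt ℝ X x)
    (hG : ∀ i, ContDiffAt ℝ 2 (G i) x) :
    ∑ i, nambuBracket (Function.update G i (directionalDeriv X (G i))) x =
      directionalDeriv X (nambuBracket G) x + divergence X x * nambuBracket G x := by
  simp only [nambuBracket_update, gradVec_directionalDeriv hX (hG _), det_updateRow_add,
    Finset.sum_add_distrib]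
  congr 1
  · rw [directionalDeriv, gradVec_dotProduct, fderiv_nambuBracket_apply hG]
  · exact sum_det_updateRow_vecMul (of fun k => gradVec (G k) x) _

/-- The vector field `X` with `{F₁, …, F_n, g} = X · ∇g`, whose components are the cofactors
`det(∇F₁, …, ∇F_n, eⱼ)`. -/
noncomputable def nambuVectorField (F : Fin n → (Fin (n + 1) → ℝ) → ℝ) (x : Fin (n + 1) → ℝ) :
    Fin (n + 1) → ℝ :=
  fun j => (of (Fin.snoc (fun i => gradVec (F i) x) (Pi.single j 1))).det

theorem nambuBracket_snoc (F : Fin n → (Fin (n + 1) → ℝ) → ℝ) (g : (Fin (n + 1) → ℝ) → ℝ) :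
    nambuBracket (Fin.snoc F g) = directionalDeriv (nambuVectorField F) g := by
  ext x
  have rows : (fun i => gradVec ((Fin.snoc F g : Fin (n + 1) → (Fin (n + 1) → ℝ) → ℝ) i) x) =
      Fin.snoc (fun i => gradVec (F i) x) (gradVec g x) :=
    Fin.comp_snoc (gradVec · x) F g
  have expand := det_updateRow_eq_dotProduct
    (of (Fin.snoc (fun i => gradVec (F i) x) 0)) (Fin.last n) (gradVec g x)
  simp only [updateRow_last_snoc] at expand
  rw [nambuBracket, rows, expand]
  rfl

variable {F : Fin n → (Fin (n + 1) → ℝ) → ℝ} {x : Fin (n + 1) → ℝ}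

theorem differentiableAt_snoc_gradVec (hF : ∀ i, ContDiffAt ℝ 2 (F i) x) (v : Fin (n + 1) → ℝ)
    (k : Fin (n + 1)) :
    DifferentiableAt ℝ
      (fun y => of (Fin.snoc (fun i => gradVec (F i) y) v) k) x := by
  refine Fin.lastCases ?_ (fun i => ?_) k
  · simp
  · simpa using differentiableAt_gradVec (hF i)

theorem differentiableAt_nambuVectorField (hF : ∀ i, ContDiffAt ℝ 2 (F i) x) :
    DifferentiableAt ℝ (nambuVectorField F) x :=
  differentiableAt_pi.2 fun _ => differentiableAt_det (differentiableAt_snoc_gradVec hF _)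

theorem divergence_nambuVectorField (hF : ∀ i, ContDiffAt ℝ 2 (F i) x) :
    divergence (nambuVectorField F) x = 0 := by
  let N (j : Fin (n + 1)) (y : Fin (n + 1) → ℝ) : Matrix (Fin (n + 1)) (Fin (n + 1)) ℝ :=
    of (Fin.snoc (fun i => gradVec (F i) y) (Pi.single j 1))
  have row_castSucc (j : Fin (n + 1)) (k : Fin n) :
      (fun y => N j y k.castSucc) = gradVec (F k) := by
    ext y l
    simp [N]
  have row_last (j : Fin (n + 1)) : (fun y => N j y (Fin.last n)) = fun _ => Pi.single j 1 := by
    ext y l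
    simp [N]
  have fderiv_component (j : Fin (n + 1)) :
      fderiv ℝ (fun y => nambuVectorField F y j) x (Pi.single j 1) =
        ∑ k : Fin n, ((N j x).updateRow k.castSucc (hessian (F k) x j)).det := by
    refine (fderiv_det_apply (M := N j) (differentiableAt_snoc_gradVec hF _) _).trans ?_
    rw [Fin.sum_univ_castSucc, row_last, fderiv_const_apply,
      det_eq_zero_of_row_eq_zero (Fin.last n) (by simp), add_zero]
    simp only [row_castSucc]
    rfl
  have symmetric_minors (k : Fin n) :
      ∑ j, ((N j x).updateRow k.castSucc (hessian (F k) x j)).det = 0 := by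
    simpa only [updateRow_last_snoc] using sum_det_updateRow_single_updateRow_eq_zero
      (of (Fin.snoc (fun i => gradVec (F i) x) 0)) (Fin.castSucc_lt_last k).ne'
      (isSymm_hessian (hF k))
  rw [divergence_eq_sum (differentiableAt_nambuVectorField hF)]
  simp only [fderiv_component]
  rw [Finset.sum_comm]
  exact Finset.sum_eq_zero fun k _ => symmetric_minors k

theorem nambuBracket_fundamental_identity {G : Fin (n + 1) → (Fin (n + 1) → ℝ) → ℝ}
    (hF : ∀ i, ContDiffAt ℝ 2 (F i) x) (hG : ∀ i, ContDiffAt ℝ 2 (G i) x) :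
    nambuBracket (Fin.snoc F (nambuBracket G)) x =
      ∑ i, nambuBracket (Function.update G i (nambuBracket (Fin.snoc F (G i)))) x := by
  simp only [nambuBracket_snoc]
  rw [sum_nambuBracket_update_directionalDeriv (differentiableAt_nambuVectorField hF) hG,
    divergence_nambuVectorField hF, zero_mul, add_zero]

end NambuBracket

section FlaschkaRatiu

variable {n : ℕ}

/-- The Flaschka–Ratiu bracket `{f, g} = det(∇K₁, …, ∇K_n, ∇f, ∇g)` on `ℝ^(n + 2)` with prescribed
Casimirs `K₁, …, K_n`. -/
noncomputable def frBracket (K : Fin n → (Fin (n + 2) → ℝ) → ℝ) (f g : (Fin (n + 2) → ℝ) → ℝ) :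
    (Fin (n + 2) → ℝ) → ℝ :=
  nambuBracket (Fin.snoc (Fin.snoc K f) g)

theorem frBracket_casimir (K : Fin n → (Fin (n + 2) → ℝ) → ℝ) (f : (Fin (n + 2) → ℝ) → ℝ)
    (i : Fin n) : frBracket K f (K i) = 0 :=
  nambuBracket_eq_zero_of_eq (i := i.castSucc.castSucc) (j := Fin.last _)
    (Fin.castSucc_lt_last _).ne (by simp)

theorem frBracket_swap (K : Fin n → (Fin (n + 2) → ℝ) → ℝ) (f g : (Fin (n + 2) → ℝ) → ℝ) :
    frBracket K f g = -frBracket K g f := by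
  rw [frBracket, frBracket, ← nambuBracket_comp_swap _ (Fin.castSucc_lt_last (Fin.last n)).ne]
  congr 1
  refine funext (Fin.lastCases ?_ (Fin.lastCases ?_ fun i => ?_))
  · simp
  · simp
  · simp [Equiv.swap_apply_of_ne_of_ne, (Fin.castSucc_lt_last _).ne]

theorem frBracket_neg_right (K : Fin n → (Fin (n + 2) → ℝ) → ℝ) (f g : (Fin (n + 2) → ℝ) → ℝ) :
    frBracket K f (-g) = -frBracket K f g := by
  ext x
  simp [frBracket, nambuBracket_snoc, directionalDeriv, gradVec_dotProduct, fderiv_neg]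

theorem frBracket_leibniz {K : Fin n → (Fin (n + 2) → ℝ) → ℝ} {f g h : (Fin (n + 2) → ℝ) → ℝ}
    {x : Fin (n + 2) → ℝ} (hK : ∀ i, ContDiffAt ℝ 2 (K i) x) (hf : ContDiffAt ℝ 2 f x)
    (hg : ContDiffAt ℝ 2 g x) (hh : ContDiffAt ℝ 2 h x) :
    frBracket K f (frBracket K g h) x =
      frBracket K (frBracket K f g) h x + frBracket K g (frBracket K f h) x := by
  let F : Fin (n + 1) → (Fin (n + 2) → ℝ) → ℝ := Fin.snoc K f
  let G : Fin (n + 2) → (Fin (n + 2) → ℝ) → ℝ := Fin.snoc (Fin.snoc K g) h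
  have hF : ∀ i, ContDiffAt ℝ 2 (F i) x :=
    Fin.lastCases (by simpa [F] using hf) (by simpa [F] using hK)
  have hG : ∀ i, ContDiffAt ℝ 2 (G i) x :=
    Fin.lastCases (by simpa [G] using hh)
      (Fin.lastCases (by simpa [G] using hg) (by simpa [G] using hK))
  have casimir_term (i : Fin n) :
      nambuBracket (Function.update G i.castSucc.castSucc (frBracket K f (K i))) x = 0 := by
    rw [frBracket_casimir, nambuBracket_update_zero, Pi.zero_apply]
  calc frBracket K f (frBracket K g h) x
      = ∑ i, nambuBracket (Function.update G i (frBracket K f (G i))) x :=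
        nambuBracket_fundamental_identity hF hG
    _ = nambuBracket (Function.update G (Fin.last n).castSucc (frBracket K f g)) x +
          nambuBracket (Function.update G (Fin.last (n + 1)) (frBracket K f h)) x := by
        simp only [Fin.sum_univ_castSucc, casimir_term, Finset.sum_const_zero,
          zero_add, G, Fin.snoc_castSucc, Fin.snoc_last]
    _ = frBracket K (frBracket K f g) h x + frBracket K g (frBracket K f h) x := by
        simp only [G, ← Fin.snoc_update, Fin.update_snoc_last, frBracket]

theorem frBracket4_eq_frBracket (K₁ K₂ f g : (Fin 4 → ℝ) → ℝ) :
    frBracket4 K₁ K₂ f g = frBracket ![K₁, K₂] f g := by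
  ext x
  refine congrArg Matrix.det (funext fun i => ?_)
  fin_cases i <;> rfl

theorem stmt_16_general {K : Fin n → (Fin (n + 2) → ℝ) → ℝ} {f g h : (Fin (n + 2) → ℝ) → ℝ}
    {x : Fin (n + 2) → ℝ} (hK : ∀ i, ContDiffAt ℝ 2 (K i) x) (hf : ContDiffAt ℝ 2 f x)
    (hg : ContDiffAt ℝ 2 g x) (hh : ContDiffAt ℝ 2 h x) :
    frBracket K f (frBracket K g h) x + frBracket K g (frBracket K h f) x +
      frBracket K h (frBracket K f g) x = 0 := by
  rw [frBracket_leibniz hK hf hg hh, frBracket_swap K h f, frBracket_neg_right,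
    frBracket_swap K h (frBracket K f g)]
  simp

end FlaschkaRatiu

theorem stmt_16 (U : Set (Fin 4 → ℝ)) (hU : IsOpen U)
    (K₁ K₂ : (Fin 4 → ℝ) → ℝ)
    (hK₁ : ContDiffOn ℝ (⊤ : ℕ∞) K₁ U) (hK₂ : ContDiffOn ℝ (⊤ : ℕ∞) K₂ U) :
    ∀ f g h : (Fin 4 → ℝ) → ℝ,
      ContDiffOn ℝ (⊤ : ℕ∞) f U → ContDiffOn ℝ (⊤ : ℕ∞) g U → ContDiffOn ℝ (⊤ : ℕ∞) h U →
      ∀ x ∈ U,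
        frBracket4 K₁ K₂ f (frBracket4 K₁ K₂ g h) x +
          frBracket4 K₁ K₂ g (frBracket4 K₁ K₂ h f) x +
          frBracket4 K₁ K₂ h (frBracket4 K₁ K₂ f g) x = 0 := by
  intro f g h hf hg hh x hx
  have contDiffAt_two {φ : (Fin 4 → ℝ) → ℝ} (hφ : ContDiffOn ℝ (⊤ : ℕ∞) φ U) :
      ContDiffAt ℝ 2 φ x :=
    (hφ.contDiffAt (hU.mem_nhds hx)).of_le (WithTop.coe_le_coe.2 (le_top : (2 : ℕ∞) ≤ ⊤))
  simp only [frBracket4_eq_frBracket]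
  exact stmt_16_general (Fin.forall_fin_two.2 ⟨contDiffAt_two hK₁, contDiffAt_two hK₂⟩)
    (contDiffAt_two hf) (contDiffAt_two hg) (contDiffAt_two hh)
end
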